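/- If τ(s) = 0 for all s ∈ ℝ (α is a planar curve), then the mean curvature H = (E·N − 2F·M + G·L)/(2(EG − F²)) of the C-ruled surface vanishes at every point (s, v) where EG − F² ≠ 0; that is, the C-ruled surface of a planar curve is a minimal surface. -/

import Mathlib

open RealInnerProductSpace

/-- Cross product on `EuclideanSpace ℝ (Fin 3)`. -/
noncomputable def cross3 (u v : EuclideanSpace ℝ (Fin 3)) : EuclideanSpace ℝ (Fin 3) :=
  (EuclideanSpace.equiv (Fin 3) ℝ).symm
    (crossProduct ((EuclideanSpace.equiv (Fin 3) ℝ) u) ((EuclideanSpace.equiv (Fin 3) ℝ) v))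

/-- Determinant of the 3×3 matrix whose rows are the given vectors. -/
noncomputable def det3 (u v w : EuclideanSpace ℝ (Fin 3)) : ℝ :=
  Matrix.det (Matrix.of ![(EuclideanSpace.equiv (Fin 3) ℝ) u,
    (EuclideanSpace.equiv (Fin 3) ℝ) v, (EuclideanSpace.equiv (Fin 3) ℝ) w])

/-!
When `τ = 0` the frame vector `C` is `-T`, so the `C`-ruled surface is the tangent surface
`α - v α′`. Of its partial derivatives, `φ_s`, `φ_v` and `φ_sv` lie in the span of `α′` and `α″`,
and `φ_vv = 0`. Only `φ_ss` involves `α‴`, which lies in the same span wherever `α′` and `α″` are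
independent, because `κ² τ = det (α′, α″, α‴)`. Hence the whole second fundamental form vanishes,
and with it `H`.
-/

section RuledSurface

variable {E : Type*} [NormedAddCommGroup E] [NormedSpace ℝ E]

/-- The partial derivative `φ_s` of a surface patch `φ(s, v)`. -/
noncomputable def partialFst (φ : ℝ → ℝ → E) (s v : ℝ) : E :=
  deriv (fun u => φ u v) s

/-- The partial derivative `φ_v` of a surface patch `φ(s, v)`. -/
noncomputable def partialSnd (φ : ℝ → ℝ → E) (s v : ℝ) : E :=
  deriv (fun w => φ s w) v

/-- The ruled surface with base curve `α` and director curve `X`. -/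
def ruledSurface (α X : ℝ → E) (s v : ℝ) : E :=
  α s + v • X s

lemma partialFst_ruledSurface {α X : ℝ → E} (hα : Differentiable ℝ α) (hX : Differentiable ℝ X) :
    partialFst (ruledSurface α X) = ruledSurface (deriv α) (deriv X) := by
  funext s v
  exact ((hα s).hasDerivAt.add ((hX s).hasDerivAt.const_smul v)).deriv

lemma partialSnd_ruledSurface (α X : ℝ → E) :
    partialSnd (ruledSurface α X) = fun s _ => X s := by
  funext s v
  exact (((hasDerivAt_id v).smul_const (X s)).const_add (α s)).deriv.trans (one_smul ℝ (X s))

end RuledSurface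

lemma det3_apply (u v w : EuclideanSpace ℝ (Fin 3)) :
    det3 u v w = u 0 * (v 1 * w 2 - v 2 * w 1) - u 1 * (v 0 * w 2 - v 2 * w 0)
      + u 2 * (v 0 * w 1 - v 1 * w 0) := by
  simp [det3, Matrix.det_fin_three]
  ring

lemma inner_cross3 (u v w : EuclideanSpace ℝ (Fin 3)) : ⟪w, cross3 u v⟫ = det3 u v w := by
  rw [det3_apply]
  simp [cross3, PiLp.inner_apply, Fin.sum_univ_three, crossProduct]
  ring

lemma det3_zero_right (u v : EuclideanSpace ℝ (Fin 3)) : det3 u v 0 = 0 := by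
  simp [det3_apply]

lemma det3_smul_add_smul (x y z : EuclideanSpace ℝ (Fin 3)) (a b c : ℝ) :
    det3 x (a • y) (b • z + c • y) = a * b * det3 x y z := by
  simp only [det3_apply, PiLp.add_apply, PiLp.smul_apply, smul_eq_mul]
  ring

lemma det3_add_smul_neg_neg (x y : EuclideanSpace ℝ (Fin 3)) (v : ℝ) :
    det3 (x + v • -y) (-x) (-y) = 0 := by
  simp only [det3_apply, PiLp.add_apply, PiLp.neg_apply, PiLp.smul_apply, smul_eq_mul]
  ring

lemma det3_add_smul_neg_add_smul (x y z : EuclideanSpace ℝ (Fin 3)) (v : ℝ) :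
    det3 (x + v • -y) (-x) (y + v • -z) = v ^ 2 * det3 x y z := by
  simp only [det3_apply, PiLp.add_apply, PiLp.neg_apply, PiLp.smul_apply, smul_eq_mul]
  ring

/-- A planar point of a surface patch: one where the second fundamental form vanishes. The
condition is put on the numerators of `L`, `M`, `N`, so no division by the area element
`√(EG - F²)` occurs. -/
def IsPlanarPoint (φ : ℝ → ℝ → EuclideanSpace ℝ (Fin 3)) (s v : ℝ) : Prop :=
  det3 (partialFst φ s v) (partialSnd φ s v) (partialFst (partialFst φ) s v) = 0 ∧
  det3 (partialFst φ s v) (partialSnd φ s v) (partialFst (partialSnd φ) s v) = 0 ∧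
  det3 (partialFst φ s v) (partialSnd φ s v) (partialSnd (partialSnd φ) s v) = 0

/-- The curvature `κ` of a space curve, by the arc-length formula `‖α″‖`. -/
noncomputable def curvature (α : ℝ → EuclideanSpace ℝ (Fin 3)) (s : ℝ) : ℝ :=
  ‖deriv (deriv α) s‖

/-- The principal normal `N` of a space curve, by the arc-length formula `α″ / κ`. -/
noncomputable def principalNormal (α : ℝ → EuclideanSpace ℝ (Fin 3)) (s : ℝ) :
    EuclideanSpace ℝ (Fin 3) :=
  (curvature α s)⁻¹ • deriv (deriv α) s

/-- The binormal `B` of a space curve, by the arc-length formula `α′ × N`. -/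
noncomputable def binormal (α : ℝ → EuclideanSpace ℝ (Fin 3)) (s : ℝ) :
    EuclideanSpace ℝ (Fin 3) :=
  cross3 (deriv α s) (principalNormal α s)

/-- The torsion `τ` of a space curve, by the arc-length formula `⟨N′, B⟩`. -/
noncomputable def torsion (α : ℝ → EuclideanSpace ℝ (Fin 3)) (s : ℝ) : ℝ :=
  ⟪deriv (principalNormal α) s, binormal α s⟫

/-- The vector `C` of the alternative moving frame `N`, `C`, `W` of a space curve; it directs the
`C`-ruled surface. -/
noncomputable def alternativeC (α : ℝ → EuclideanSpace ℝ (Fin 3)) (s : ℝ) :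
    EuclideanSpace ℝ (Fin 3) :=
  (Real.sqrt (curvature α s ^ 2 + torsion α s ^ 2))⁻¹ •
    ((-curvature α s) • deriv α s + torsion α s • binormal α s)

section SpaceCurve

variable {α : ℝ → EuclideanSpace ℝ (Fin 3)} {s : ℝ}

lemma torsion_eq_det3 (hα : DifferentiableAt ℝ (deriv (deriv α)) s)
    (hs : deriv (deriv α) s ≠ 0) :
    torsion α s =
      (curvature α s)⁻¹ ^ 2 * det3 (deriv α s) (deriv (deriv α) s) (deriv (deriv (deriv α)) s) := by
  have hκ : DifferentiableAt ℝ (fun u => (curvature α u)⁻¹) s :=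
    (hα.norm ℝ hs).inv (norm_ne_zero_iff.mpr hs)
  have hN : deriv (principalNormal α) s = (curvature α s)⁻¹ • deriv (deriv (deriv α)) s +
      deriv (fun u => (curvature α u)⁻¹) s • deriv (deriv α) s :=
    deriv_fun_smul hκ hα
  rw [torsion, binormal, inner_cross3, hN, principalNormal, det3_smul_add_smul, ← sq]

lemma det3_derivs_eq_zero_of_torsion_eq_zero (hα : DifferentiableAt ℝ (deriv (deriv α)) s)
    (hs : deriv (deriv α) s ≠ 0) (hτ : torsion α s = 0) :
    det3 (deriv α s) (deriv (deriv α) s) (deriv (deriv (deriv α)) s) = 0 := by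
  rw [torsion_eq_det3 hα hs] at hτ
  exact (mul_eq_zero.mp hτ).resolve_left (pow_ne_zero 2 (inv_ne_zero (norm_ne_zero_iff.mpr hs)))

lemma alternativeC_eq_neg_deriv_of_torsion_eq_zero (hs : deriv (deriv α) s ≠ 0)
    (hτ : torsion α s = 0) : alternativeC α s = -deriv α s := by
  have hκ : 0 < curvature α s := norm_pos_iff.mpr hs
  simp [alternativeC, hτ, Real.sqrt_sq hκ.le, smul_smul, inv_mul_cancel₀ hκ.ne']

lemma isPlanarPoint_ruledSurface_neg_deriv (hα : ContDiff ℝ 3 α)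
    (hdet : det3 (deriv α s) (deriv (deriv α) s) (deriv (deriv (deriv α)) s) = 0) (v : ℝ) :
    IsPlanarPoint (ruledSurface α (-deriv α)) s v := by
  have hα' : ContDiff ℝ 2 (deriv α) := hα.deriv'
  have hα'' : ContDiff ℝ 1 (deriv (deriv α)) := hα'.deriv'
  have d₀ : Differentiable ℝ α := hα.differentiable (by norm_num)
  have d₁ : Differentiable ℝ (deriv α) := hα'.differentiable (by norm_num)
  have d₂ : Differentiable ℝ (deriv (deriv α)) := hα''.differentiable (by norm_num)
  have hs : partialFst (ruledSurface α (-deriv α)) =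
      ruledSurface (deriv α) (-deriv (deriv α)) := by
    rw [partialFst_ruledSurface d₀ d₁.neg, deriv.neg']
    rfl
  have hss : partialFst (ruledSurface (deriv α) (-deriv (deriv α))) =
      ruledSurface (deriv (deriv α)) (-deriv (deriv (deriv α))) := by
    rw [partialFst_ruledSurface d₁ d₂.neg, deriv.neg']
    rfl
  refine ⟨?_, ?_, ?_⟩
  · rw [hs, hss, partialSnd_ruledSurface]
    exact (det3_add_smul_neg_add_smul _ _ _ v).trans (by rw [hdet, mul_zero])
  · have hsv : partialFst (fun u _ => (-deriv α) u) s v = -deriv (deriv α) s := deriv.neg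
    rw [hs, partialSnd_ruledSurface, hsv]
    exact det3_add_smul_neg_neg _ _ v
  · have hvv : partialSnd (fun u _ => (-deriv α) u) s v = 0 := deriv_const v _
    rw [partialSnd_ruledSurface, hvv, det3_zero_right]

end SpaceCurve

theorem stmt_14_general {α : ℝ → EuclideanSpace ℝ (Fin 3)} (hα : ContDiff ℝ 3 α)
    (hκ : ∀ s, 0 < curvature α s) (hτ : ∀ s, torsion α s = 0) (s v : ℝ) :
    IsPlanarPoint (ruledSurface α (alternativeC α)) s v := by
  have hα'' (u : ℝ) : deriv (deriv α) u ≠ 0 := norm_pos_iff.mp (hκ u)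
  have hC : alternativeC α = -deriv α :=
    funext fun u => alternativeC_eq_neg_deriv_of_torsion_eq_zero (hα'' u) (hτ u)
  have d₂ : Differentiable ℝ (deriv (deriv α)) :=
    ContDiff.differentiable (n := 1) hα.deriv'.deriv' one_ne_zero
  rw [hC]
  exact isPlanarPoint_ruledSurface_neg_deriv hα
    (det3_derivs_eq_zero_of_torsion_eq_zero (d₂ s) (hα'' s) (hτ s)) v

theorem stmt_14
    (α : ℝ → EuclideanSpace ℝ (Fin 3))
    (hα : ContDiff ℝ (⊤ : ℕ∞) α)
    (hunit : ∀ s, ‖deriv α s‖ = 1)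
    (T : ℝ → EuclideanSpace ℝ (Fin 3)) (hT : ∀ s, T s = deriv α s)
    (κ : ℝ → ℝ) (hκ : ∀ s, κ s = ‖deriv (deriv α) s‖) (hκpos : ∀ s, 0 < κ s)
    (N : ℝ → EuclideanSpace ℝ (Fin 3)) (hN : ∀ s, N s = (κ s)⁻¹ • deriv (deriv α) s)
    (B : ℝ → EuclideanSpace ℝ (Fin 3)) (hB : ∀ s, B s = cross3 (T s) (N s))
    (τ : ℝ → ℝ) (hτ : ∀ s, τ s = ⟪deriv N s, B s⟫)
    (f : ℝ → ℝ) (hf : ∀ s, f s = Real.sqrt (κ s ^ 2 + τ s ^ 2))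
    (g : ℝ → ℝ) (hg : ∀ s, g s = κ s ^ 2 / (κ s ^ 2 + τ s ^ 2) * deriv (fun u => τ u / κ u) s)
    (C : ℝ → EuclideanSpace ℝ (Fin 3))
    (hC : ∀ s, C s = (Real.sqrt (κ s ^ 2 + τ s ^ 2))⁻¹ • ((-κ s) • T s + τ s • B s))
    (W : ℝ → EuclideanSpace ℝ (Fin 3))
    (hW : ∀ s, W s = (Real.sqrt (κ s ^ 2 + τ s ^ 2))⁻¹ • (τ s • T s + κ s • B s))
    (φs φv : ℝ → ℝ → EuclideanSpace ℝ (Fin 3))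
    (hφs : ∀ s v, φs s v = deriv (fun u => α u + v • C u) s)
    (hφv : ∀ s v, φv s v = deriv (fun w => α s + w • C s) v)
    (φss φsv φvv : ℝ → ℝ → EuclideanSpace ℝ (Fin 3))
    (hφss : ∀ s v, φss s v = deriv (fun u => φs u v) s)
    (hφsv : ∀ s v, φsv s v = deriv (fun u => φv u v) s)
    (hφvv : ∀ s v, φvv s v = deriv (fun w => φv s w) v)
    (EE FF GG LL MM NN : ℝ → ℝ → ℝ)
    (hEE : ∀ s v, EE s v = ‖φs s v‖ ^ 2)
    (hFF : ∀ s v, FF s v = ⟪φs s v, φv s v⟫)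
    (hGG : ∀ s v, GG s v = ‖φv s v‖ ^ 2)
    (hLL : ∀ s v, LL s v =
      det3 (φs s v) (φv s v) (φss s v) / Real.sqrt (EE s v * GG s v - FF s v ^ 2))
    (hMM : ∀ s v, MM s v =
      det3 (φs s v) (φv s v) (φsv s v) / Real.sqrt (EE s v * GG s v - FF s v ^ 2))
    (hNN : ∀ s v, NN s v =
      det3 (φs s v) (φv s v) (φvv s v) / Real.sqrt (EE s v * GG s v - FF s v ^ 2))
    (hplanar : ∀ s : ℝ, τ s = 0) :
    ∀ (s v : ℝ),
      EE s v * GG s v - FF s v ^ 2 ≠ 0 →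
      (EE s v * NN s v - 2 * FF s v * MM s v + GG s v * LL s v) /
        (2 * (EE s v * GG s v - FF s v ^ 2)) = 0 := by
  obtain rfl : T = deriv α := funext hT
  obtain rfl : κ = curvature α := funext hκ
  obtain rfl : N = principalNormal α := funext hN
  obtain rfl : B = binormal α := funext hB
  obtain rfl : τ = torsion α := funext hτ
  obtain rfl : C = alternativeC α := funext hC
  obtain rfl : φs = partialFst (ruledSurface α (alternativeC α)) := funext₂ hφs
  obtain rfl : φv = partialSnd (ruledSurface α (alternativeC α)) := funext₂ hφv
  obtain rfl : φss = partialFst (partialFst _) := funext₂ hφss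
  obtain rfl : φsv = partialFst (partialSnd _) := funext₂ hφsv
  obtain rfl : φvv = partialSnd (partialSnd _) := funext₂ hφvv
  intro s v _
  obtain ⟨hL, hM, hN₀⟩ := stmt_14_general (contDiff_infty.mp hα 3) hκpos hplanar s v
  simp only [hLL, hMM, hNN, hL, hM, hN₀, zero_div, mul_zero, sub_zero, add_zero]
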